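/- For all integers t ≥ 3 and n ≥ 1, every red/blue edge-coloring of the complete graph on {1,…,N}, where N = (t−2)·n^2, contains a blue clique of size n or a semi-red t-clique. -/

import Mathlib

/-- `χ i j` is the color of the edge `{i, j}` for `i < j`: `true` = red, `false` = blue.
A semi-red `t`-clique: vertices `x_1 < x_2 < … < x_t` such that all edges `x_1 x_i`
(`2 ≤ i ≤ t`) and all edges `x_i x_t` (`1 ≤ i ≤ t − 1`) are red. -/
def ContainsSemiRedClique (N t : ℕ) (χ : Fin N → Fin N → Bool) : Prop :=
  ∃ f : Fin t → Fin N, StrictMono f ∧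
    (∀ (i : ℕ) (_hi0 : 0 < i) (hi : i < t),
      χ (f ⟨0, by omega⟩) (f ⟨i, hi⟩) = true) ∧
    (∀ (i : ℕ) (hi : i < t - 1),
      χ (f ⟨i, by omega⟩) (f ⟨t - 1, by omega⟩) = true)

/-- A blue clique of size `n`. -/
def ContainsBlueClique (N n : ℕ) (χ : Fin N → Fin N → Bool) : Prop :=
  ∃ f : Fin n → Fin N, StrictMono f ∧ ∀ i j : Fin n, i < j → χ (f i) (f j) = false

/-!
If every nonempty set of vertices of a graph contains a vertex with fewer than `d` neighbours in
that set, then repeatedly picking such a vertex and discarding its neighbours yields an independent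
set containing at least a `1 / d` fraction of the vertices.

Suppose that some vertex `x` has more than `(t - 2) (n - 1)` later neighbours in the red graph.
Either some `y` among them is red to `t - 2` earlier ones, which together with `x` and `y` form a
semi-red `t`-clique, or picking the latest vertex each time, with `d = t - 2`, yields `n`
independent, that is, pairwise blue, vertices. If there is no such `x`, pick the earliest vertex
each time, with `d = (t - 2) (n - 1) + 1`.
-/

open Finset

section IndepSet

variable {α : Type*} (G : SimpleGraph α) [DecidableRel G.Adj]

theorem exists_isIndepSet_of_forall_subset {d : ℕ} (S : Finset α)
    (hS : ∀ U ⊆ S, U.Nonempty → ∃ v ∈ U, #{u ∈ U | G.Adj v u} < d) :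
    ∃ T ⊆ S, G.IsIndepSet T ∧ #S ≤ d * #T := by
  classical
  induction S using Finset.strongInduction with
  | H S ih =>
    obtain rfl | hne := S.eq_empty_or_nonempty
    · exact ⟨∅, Subset.rfl, by simp, by simp⟩
    obtain ⟨v, hv, hdeg⟩ := hS S Subset.rfl hne
    set S' := {u ∈ S.erase v | ¬ G.Adj v u} with hS'
    have hS'S : S' ⊆ S := (filter_subset _ _).trans (erase_subset _ _)
    have hvS' : v ∉ S' := by simp [hS']
    have hcard : #S = #{u ∈ S | G.Adj v u} + #S' + 1 := by
      have hnbr : {u ∈ S.erase v | G.Adj v u} = {u ∈ S | G.Adj v u} := by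
        rw [filter_erase, erase_eq_of_notMem (by simp)]
      rw [← hnbr, card_filter_add_card_filter_not, card_erase_add_one hv]
    obtain ⟨T, hTS', hT, hcardT⟩ := ih S' (ssubset_of_subset_of_ne hS'S fun h => hvS' (h ▸ hv))
      fun U hU => hS U (hU.trans hS'S)
    refine ⟨insert v T, insert_subset hv (hTS'.trans hS'S), ?_, ?_⟩
    · rw [coe_insert]
      refine hT.insert fun u hu _ => ?_
      have hvu : ¬ G.Adj v u := (mem_filter.1 (hTS' hu)).2
      exact ⟨hvu, fun huv => hvu huv.symm⟩
    · rw [card_insert_of_notMem fun h => hvS' (hTS' h), mul_add_one]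
      omega

variable [LinearOrder α]

theorem exists_isIndepSet_of_card_earlier_adj_lt {d : ℕ} (S : Finset α)
    (hS : ∀ v ∈ S, #{u ∈ S | u < v ∧ G.Adj v u} < d) :
    ∃ T ⊆ S, G.IsIndepSet T ∧ #S ≤ d * #T := by
  refine exists_isIndepSet_of_forall_subset G S fun U hU hne => ⟨U.max' hne, U.max'_mem hne, ?_⟩
  refine (card_le_card fun u hu => ?_).trans_lt (hS _ (hU (U.max'_mem hne)))
  obtain ⟨huU, hadj⟩ := mem_filter.1 hu
  exact mem_filter.2 ⟨hU huU, (U.le_max' u huU).lt_of_ne hadj.ne', hadj⟩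

theorem exists_isIndepSet_of_card_later_adj_lt {d : ℕ} (S : Finset α)
    (hS : ∀ v ∈ S, #{u ∈ S | v < u ∧ G.Adj v u} < d) :
    ∃ T ⊆ S, G.IsIndepSet T ∧ #S ≤ d * #T := by
  refine exists_isIndepSet_of_forall_subset G S fun U hU hne => ⟨U.min' hne, U.min'_mem hne, ?_⟩
  refine (card_le_card fun u hu => ?_).trans_lt (hS _ (hU (U.min'_mem hne)))
  obtain ⟨huU, hadj⟩ := mem_filter.1 hu
  exact mem_filter.2 ⟨hU huU, (U.min'_le u huU).lt_of_ne hadj.ne, hadj⟩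

end IndepSet

section Semiclique

variable {α : Type*} [LinearOrder α]

/-- A set of vertices whose least and greatest elements, where they exist, are adjacent to all its
other elements: the semi-red cliques of a coloring are the finite semicliques of its red graph. -/
def IsSemiclique (G : SimpleGraph α) (T : Set α) : Prop :=
  ∀ ⦃x⦄, x ∈ T → ∀ ⦃y⦄, y ∈ T → x < y → IsLeast T x ∨ IsGreatest T y → G.Adj x y

variable {G : SimpleGraph α}

theorem isSemiclique_insert_insert {x y : α} {Z : Set α} (hxy : G.Adj x y) (hlt : x < y)
    (hZ : ∀ z ∈ Z, x < z ∧ z < y) (hxZ : ∀ z ∈ Z, G.Adj x z) (hyZ : ∀ z ∈ Z, G.Adj z y) :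
    IsSemiclique G (insert x (insert y Z)) := by
  have hleast : IsLeast (insert x (insert y Z)) x := by
    refine ⟨by simp, ?_⟩
    rintro w (rfl | rfl | hw)
    exacts [le_rfl, hlt.le, (hZ w hw).1.le]
  have hgreatest : IsGreatest (insert x (insert y Z)) y := by
    refine ⟨by simp, ?_⟩
    rintro w (rfl | rfl | hw)
    exacts [hlt.le, le_rfl, (hZ w hw).2.le]
  rintro a ha b hb hab (h | h)
  · obtain rfl := h.unique hleast
    obtain rfl | rfl | hb := hb
    exacts [absurd hab (lt_irrefl _), hxy, hxZ b hb]
  · obtain rfl := h.unique hgreatest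
    obtain rfl | rfl | ha := ha
    exacts [hxy, absurd hab (lt_irrefl _), hyZ a ha]

theorem exists_isSemiclique_of_le_card {x y : α} {s : ℕ} {Z : Finset α} (hxy : G.Adj x y)
    (hlt : x < y) (hZ : ∀ z ∈ Z, x < z ∧ z < y) (hxZ : ∀ z ∈ Z, G.Adj x z)
    (hyZ : ∀ z ∈ Z, G.Adj z y) (hs : s ≤ #Z) :
    ∃ T ⊆ insert x (insert y Z), #T = s + 2 ∧ IsSemiclique G T := by
  obtain ⟨U, hUZ, rfl⟩ := exists_subset_card_eq hs
  have hyU : y ∉ U := fun h => (hZ y (hUZ h)).2.false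
  have hxU : x ∉ insert y U := by
    rw [mem_insert]
    rintro (rfl | h)
    exacts [hlt.false, (hZ x (hUZ h)).1.false]
  refine ⟨insert x (insert y U), insert_subset_insert _ (insert_subset_insert _ hUZ), ?_, ?_⟩
  · rw [card_insert_of_notMem hxU, card_insert_of_notMem hyU]
  · push_cast
    exact isSemiclique_insert_insert hxy hlt (fun z hz => hZ z (hUZ hz))
      (fun z hz => hxZ z (hUZ hz)) fun z hz => hyZ z (hUZ hz)

theorem exists_isIndepSet_or_isSemiclique_of_forall_adj {x : α} {s : ℕ} {A : Finset α}
    (hA : ∀ y ∈ A, x < y ∧ G.Adj x y) :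
    (∃ T ⊆ A, G.IsIndepSet T ∧ #A ≤ s * #T) ∨
      ∃ T ⊆ insert x A, #T = s + 2 ∧ IsSemiclique G T := by
  classical
  by_cases hsparse : ∀ y ∈ A, #{z ∈ A | z < y ∧ G.Adj y z} < s
  · exact .inl (exists_isIndepSet_of_card_earlier_adj_lt G A hsparse)
  push Not at hsparse
  obtain ⟨y, hy, hs⟩ := hsparse
  obtain ⟨T, hT, hTsemi⟩ := exists_isSemiclique_of_le_card (hA y hy).2 (hA y hy).1
    (fun z hz => ⟨(hA z (mem_filter.1 hz).1).1, (mem_filter.1 hz).2.1⟩)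
    (fun z hz => (hA z (mem_filter.1 hz).1).2) (fun z hz => (mem_filter.1 hz).2.2.symm) hs
  refine .inr ⟨T, hT.trans (insert_subset_insert _ ?_), hTsemi⟩
  exact insert_subset hy (filter_subset _ _)

variable (G) in
theorem stmt19_general (V : Finset α) {k s : ℕ} (hV : k * (s * k + 1) < #V) :
    (∃ T ⊆ V, G.IsNIndepSet (k + 1) T) ∨ ∃ T ⊆ V, #T = s + 2 ∧ IsSemiclique G T := by
  classical
  suffices (∃ T ⊆ V, G.IsIndepSet T ∧ k < #T) ∨ ∃ T ⊆ V, #T = s + 2 ∧ IsSemiclique G T by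
    refine this.imp_left fun ⟨T, hTV, hT, hk⟩ => ?_
    obtain ⟨U, hUT, hU⟩ := exists_subset_card_eq (Nat.succ_le_of_lt hk)
    exact ⟨U, hUT.trans hTV, hT.mono (coe_subset.2 hUT), hU⟩
  by_cases hsparse : ∀ x ∈ V, #{y ∈ V | x < y ∧ G.Adj x y} < s * k + 1
  · obtain ⟨T, hTV, hT, hcard⟩ := exists_isIndepSet_of_card_later_adj_lt G V hsparse
    refine .inl ⟨T, hTV, hT, lt_of_mul_lt_mul_left (a := s * k + 1) ?_ (Nat.zero_le _)⟩
    rw [mul_comm]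
    exact hV.trans_le hcard
  push Not at hsparse
  obtain ⟨x, hx, hdense⟩ := hsparse
  have hadj : ∀ y ∈ ({y ∈ V | x < y ∧ G.Adj x y} : Finset α), x < y ∧ G.Adj x y :=
    fun y hy => (mem_filter.1 hy).2
  refine (exists_isIndepSet_or_isSemiclique_of_forall_adj (s := s) hadj).imp ?_ ?_
  · rintro ⟨T, hTA, hT, hcard⟩
    exact ⟨T, hTA.trans (filter_subset _ _), hT,
      lt_of_mul_lt_mul_left (hdense.trans hcard) (Nat.zero_le s)⟩
  · rintro ⟨T, hTA, hT⟩
    exact ⟨T, hTA.trans (insert_subset hx (filter_subset _ _)), hT⟩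

end Semiclique

section Coloring

variable {N : ℕ}

/-- The graph of the red edges of a coloring, which reads off the color of an edge `{i, j}` from
`χ i j` with `i < j` only. -/
def redGraph (χ : Fin N → Fin N → Bool) : SimpleGraph (Fin N) :=
  SimpleGraph.fromRel fun i j => i < j ∧ χ i j = true

variable {χ : Fin N → Fin N → Bool}

theorem redGraph_adj_iff_of_lt {i j : Fin N} (hij : i < j) :
    (redGraph χ).Adj i j ↔ χ i j = true := by
  simp [redGraph, hij, hij.ne, hij.not_gt]

theorem containsBlueClique_of_isNIndepSet {n : ℕ} {T : Finset (Fin N)}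
    (hT : (redGraph χ).IsNIndepSet n T) : ContainsBlueClique N n χ := by
  let f := T.orderEmbOfFin hT.card_eq
  refine ⟨f, f.strictMono, fun i j hij => ?_⟩
  have hnadj : ¬ (redGraph χ).Adj (f i) (f j) :=
    hT.isIndepSet (T.orderEmbOfFin_mem _ i) (T.orderEmbOfFin_mem _ j) (f.strictMono hij).ne
  simpa [redGraph_adj_iff_of_lt (f.strictMono hij)] using hnadj

theorem containsSemiRedClique_of_isSemiclique {t : ℕ} {T : Finset (Fin N)} (hcard : #T = t)
    (hT : IsSemiclique (redGraph χ) T) : ContainsSemiRedClique N t χ := by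
  let f := T.orderEmbOfFin hcard
  have hmem (i : Fin t) : f i ∈ T := T.orderEmbOfFin_mem hcard i
  have hrange : (T : Set (Fin N)) = Set.range f := (T.range_orderEmbOfFin hcard).symm
  have hred {i j : Fin t} (hij : i < j) (h : IsBot i ∨ IsTop j) : χ (f i) (f j) = true := by
    have hlt : f i < f j := f.strictMono hij
    refine (redGraph_adj_iff_of_lt hlt).1 (hT (hmem i) (hmem j) hlt (h.imp ?_ ?_))
    · exact fun hi => ⟨hmem i, hrange ▸ Set.forall_mem_range.2 fun l => f.monotone (hi l)⟩
    · exact fun hj => ⟨hmem j, hrange ▸ Set.forall_mem_range.2 fun l => f.monotone (hj l)⟩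
  refine ⟨f, f.strictMono, fun i hi0 hi => hred hi0 (.inl fun l => Nat.zero_le l),
    fun i hi => hred hi (.inr fun l => Nat.le_sub_one_of_lt l.2)⟩

end Coloring

/-- for `t ≥ 3` and `n ≥ 1`, every red/blue edge-coloring of `K_N`
with `N = (t − 2)·n²` contains a blue clique of size `n` or a semi-red `t`-clique. -/
theorem stmt19 (t n N : ℕ) (ht : 3 ≤ t) (hn : 1 ≤ n)
    (hN : N = (t - 2) * n ^ 2) (χ : Fin N → Fin N → Bool) :
    ContainsBlueClique N n χ ∨ ContainsSemiRedClique N t χ := by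
  obtain ⟨s, rfl⟩ := Nat.exists_eq_add_of_le' ht
  obtain ⟨k, rfl⟩ := Nat.exists_eq_add_of_le' hn
  have hcard : k * ((s + 1) * k + 1) < #(univ : Finset (Fin N)) := by
    rw [card_fin, hN, show s + 3 - 2 = s + 1 by omega]
    nlinarith
  exact (stmt19_general (redGraph χ) univ hcard).imp
    (fun ⟨_, _, hT⟩ => containsBlueClique_of_isNIndepSet hT)
    fun ⟨_, _, hT, hsemi⟩ => containsSemiRedClique_of_isSemiclique hT hsemi
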